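/- Fix a natural number n ≥ 1 and let h = ⌊n/2⌋. Define F_NSA(γ) = 2/(1+(1-γ)^{-n}) + nγ/((1-γ)^{1-n}+(1-γ)) and F_nonNSA(γ) = ((1-γ)^h + (1-γ)^{n-h})/2 + nγ(1-γ)^{n-1}/2. Then F_NSA(γ) - F_nonNSA(γ) = ((2nh - 2h²)/4)·γ² + O(γ³) as γ → 0⁺. -/

import Mathlib

/-!
Put `q = 1 - γ` and `x = q ^ n`. Clearing negative powers,
`F_NSA = (2 x + n γ q ^ (n - 1)) / (1 + x)`, so the quantity to be bounded is `N / (1 + x)` with `N`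
a polynomial in `γ`. Expanding every power of `q` to second order with a continuous cubic remainder
(`one_sub_pow_expansion`), the coefficients of `1, γ, γ²` in `N` cancel, hence `N = γ³ S(γ)` with
`S` continuous. Since `1 + x ≥ 1`, a bound for `|S|` on `[0, 1]` serves as the constant.
-/

/-- Second-order expansion of `(1 - x) ^ m` at `0`, with a continuous factor in the cubic
remainder. -/
lemma one_sub_pow_expansion (m : ℕ) : ∃ R : ℝ → ℝ, Continuous R ∧
    ∀ x : ℝ, (1 - x) ^ m = 1 - m * x + (m * (m - 1) / 2) * x ^ 2 + x ^ 3 * R x := by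
  induction m with
  | zero => exact ⟨fun _ => 0, continuous_const, fun x => by simp⟩
  | succ m ih =>
    obtain ⟨R, hR, h⟩ := ih
    refine ⟨fun x => (1 - x) * R x - m * (m - 1) / 2, by fun_prop, fun x => ?_⟩
    rw [pow_succ, h]
    push_cast
    ring

/-- Fidelity advantage of the NSA over the non-NSA self-complementary code, `h = ⌊n/2⌋`:
`F_NSA(γ) - F_nonNSA(γ) = ((2nh-2h²)/4)γ² + O(γ³)` as `γ → 0⁺`. -/
theorem stmt_7 (n h : ℕ) (hn : 1 ≤ n) (hh : h = n / 2) :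
    ∃ C : ℝ, 0 < C ∧ ∃ δ : ℝ, 0 < δ ∧ δ < 1 ∧
      ∀ γ : ℝ, 0 < γ → γ < δ →
        |(2 / (1 + (1 - γ) ^ (-(n : ℤ)))
            + n * γ / ((1 - γ) ^ (1 - (n : ℤ)) + (1 - γ)))
          - (((1 - γ) ^ h + (1 - γ) ^ (n - h)) / 2 + n * γ * (1 - γ) ^ (n - 1) / 2)
          - ((2 * (n : ℝ) * (h : ℝ) - 2 * (h : ℝ) ^ 2) / 4) * γ ^ 2| ≤ C * γ ^ 3 := by
  have hhn : h ≤ n := by omega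
  obtain ⟨X, hX, eX⟩ := one_sub_pow_expansion n
  obtain ⟨Y, hY, eY⟩ := one_sub_pow_expansion (n - 1)
  obtain ⟨A, hA, eA⟩ := one_sub_pow_expansion h
  obtain ⟨B, hB, eB⟩ := one_sub_pow_expansion (n - h)
  rw [Nat.cast_sub hn, Nat.cast_one] at eY
  rw [Nat.cast_sub hhn] at eB
  -- `S` is the cofactor of `γ³` in the numerator `N`.
  let S : ℝ → ℝ := fun t =>
    X t + n * ((n - 1) * (n - 2) / 2 + t * Y t)
      + (n - n ^ 2) / 4 * (n - t * (n * (n - 1) / 2) - t ^ 2 * X t)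
      - (1 + (1 - t) ^ n) * ((A t + B t) / 2 + n / 2 * ((n - 1) * (n - 2) / 2 + t * Y t))
  have hS : Continuous S := by fun_prop
  obtain ⟨C, hC⟩ := (isCompact_Icc (a := (0 : ℝ)) (b := 1)).exists_bound_of_continuousOn
    hS.continuousOn
  refine ⟨max C 1, by positivity, 1 / 2, by norm_num, by norm_num, fun γ h0 h1 => ?_⟩
  have hq : 0 < 1 - γ := by linarith
  have hx : 0 < (1 - γ) ^ n := by positivity
  have hSC : |S γ| ≤ max C 1 :=
    (hC γ ⟨h0.le, by linarith⟩).trans (le_max_left _ _)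
  have e1 : 2 / (1 + (1 - γ) ^ (-(n : ℤ))) = 2 * (1 - γ) ^ n / (1 + (1 - γ) ^ n) := by
    rw [zpow_neg, zpow_natCast]
    field_simp
    ring
  have e2 : n * γ / ((1 - γ) ^ (1 - (n : ℤ)) + (1 - γ))
      = n * γ * (1 - γ) ^ (n - 1) / (1 + (1 - γ) ^ n) := by
    have hz : (1 - γ) ^ (1 - (n : ℤ)) = ((1 - γ) ^ (n - 1))⁻¹ := by
      rw [← zpow_natCast, ← zpow_neg, Nat.cast_sub hn]
      congr 1
      push_cast
      ring
    have hp : (1 - γ) ^ n = (1 - γ) ^ (n - 1) * (1 - γ) := by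
      rw [← pow_succ, Nat.sub_add_cancel hn]
    have hy : 0 < (1 - γ) ^ (n - 1) := by positivity
    rw [hz, hp]
    field_simp
  have key : (2 / (1 + (1 - γ) ^ (-(n : ℤ)))
            + n * γ / ((1 - γ) ^ (1 - (n : ℤ)) + (1 - γ)))
          - (((1 - γ) ^ h + (1 - γ) ^ (n - h)) / 2 + n * γ * (1 - γ) ^ (n - 1) / 2)
          - ((2 * (n : ℝ) * (h : ℝ) - 2 * (h : ℝ) ^ 2) / 4) * γ ^ 2
      = γ ^ 3 * S γ / (1 + (1 - γ) ^ n) := by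
    rw [e1, e2, eq_div_iff (by positivity), sub_mul, sub_mul, add_mul,
      div_mul_cancel₀ _ (by positivity), div_mul_cancel₀ _ (by positivity)]
    simp only [S]
    rw [eX, eY, eA, eB]
    ring
  rw [key, abs_div, abs_mul, abs_of_pos (show 0 < γ ^ 3 by positivity),
    abs_of_pos (show 0 < 1 + (1 - γ) ^ n by positivity)]
  calc γ ^ 3 * |S γ| / (1 + (1 - γ) ^ n) ≤ γ ^ 3 * |S γ| :=
        div_le_self (by positivity) (by linarith)
    _ ≤ γ ^ 3 * max C 1 := by gcongr
    _ = max C 1 * γ ^ 3 := mul_comm _ _
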